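/- For all integers 1 ≤ i ≤ j ≤ n+2 and 1 ≤ i′ ≤ j′ ≤ n+2, the k-dimension of Hom_{rep Q}(M(i,j), M(i′,j′)) equals the k-dimension of Hom_{rep Q̄}(M̄(i,j), M̄(i′,j′)). -/

import Mathlib

open scoped Classical

noncomputable section

namespace CambrianA

/-! ### Combinatorics of a type `A_{n+2}` quiver.

Vertices are `1, …, n+2`.  For `1 ≤ i ≤ n+1`, `ε i = true` means that the arrow between
`i` and `i+1` is oriented `i → i+1` (`i` is *upper-barred*), and `ε i = false` means it is
oriented `(i+1) → i` (`i` is *lower-barred*). -/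

/-- `MaxIncr n ε i j` : the path `i → i+1 → ⋯ → j` is a maximal increasing path of `Q`. -/
def MaxIncr (n : ℕ) (ε : ℕ → Bool) (i j : ℕ) : Prop :=
  1 ≤ i ∧ i ≤ j ∧ j ≤ n + 2 ∧ (∀ ℓ, i ≤ ℓ → ℓ < j → ε ℓ = true) ∧
    (i = 1 ∨ ε (i - 1) = false) ∧ (j = n + 2 ∨ ε j = false)

/-- `MaxDecr n ε i j` : the path `i → i-1 → ⋯ → j` is a maximal decreasing path of `Q`. -/
def MaxDecr (n : ℕ) (ε : ℕ → Bool) (i j : ℕ) : Prop :=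
  1 ≤ j ∧ j ≤ i ∧ i ≤ n + 2 ∧ (∀ ℓ, j ≤ ℓ → ℓ < i → ε ℓ = false) ∧
    (i = n + 2 ∨ ε i = true) ∧ (j = 1 ∨ ε (j - 1) = true)

/-- Vertices of the polygon lying on the lower boundary: `0`, `n+2` and lower-barred ones. -/
def LowerVertex (n : ℕ) (ε : ℕ → Bool) (x : ℕ) : Prop :=
  x = 0 ∨ x = n + 2 ∨ (1 ≤ x ∧ x ≤ n + 1 ∧ ε x = false)

/-- Vertices of the polygon lying on the upper boundary: `0`, `n+2` and upper-barred ones. -/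
def UpperVertex (n : ℕ) (ε : ℕ → Bool) (x : ℕ) : Prop :=
  x = 0 ∨ x = n + 2 ∨ (1 ≤ x ∧ x ≤ n + 1 ∧ ε x = true)

/-- `(a,b)` is a lower boundary edge: `a < b` are consecutive lower vertices. -/
def LowerEdge (n : ℕ) (ε : ℕ → Bool) (a b : ℕ) : Prop :=
  LowerVertex n ε a ∧ LowerVertex n ε b ∧ a < b ∧
    ∀ c, LowerVertex n ε c → ¬(a < c ∧ c < b)

/-- `(a,b)` is an upper boundary edge: `a < b` are consecutive upper vertices. -/
def UpperEdge (n : ℕ) (ε : ℕ → Bool) (a b : ℕ) : Prop :=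
  UpperVertex n ε a ∧ UpperVertex n ε b ∧ a < b ∧
    ∀ c, UpperVertex n ε c → ¬(a < c ∧ c < b)

def BoundaryEdge (n : ℕ) (ε : ℕ → Bool) (a b : ℕ) : Prop :=
  LowerEdge n ε a b ∨ UpperEdge n ε a b

/-- `IsHook n ε a lo hi` : the hook of the arrow of `Q` between `a` and `a+1` is the
maximal path supported on the interval `[lo, hi]`.
If `ε a = true` (arrow `a → a+1`, source `a`), the hook is the maximal decreasing path
starting at `a`; if `ε a = false` (arrow `a+1 → a`, source `a+1`), the hook is the
maximal increasing path starting at `a+1`. -/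
def IsHook (n : ℕ) (ε : ℕ → Bool) (a lo hi : ℕ) : Prop :=
  if ε a = true then
    hi = a ∧ 1 ≤ lo ∧ lo ≤ a ∧ (∀ ℓ, lo ≤ ℓ → ℓ < a → ε ℓ = false) ∧
      (lo = 1 ∨ ε (lo - 1) = true)
  else
    lo = a + 1 ∧ a + 1 ≤ hi ∧ hi ≤ n + 2 ∧ (∀ ℓ, a + 1 ≤ ℓ → ℓ < hi → ε ℓ = true) ∧
      (hi = n + 2 ∨ ε hi = false)

/-- `IsCohook n ε a lo hi` : the cohook of the arrow of `Q` between `a` and `a+1` is the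
maximal path supported on the interval `[lo, hi]`, ending at the target of the arrow. -/
def IsCohook (n : ℕ) (ε : ℕ → Bool) (a lo hi : ℕ) : Prop :=
  if ε a = true then
    lo = a + 1 ∧ a + 1 ≤ hi ∧ hi ≤ n + 2 ∧ (∀ ℓ, a + 1 ≤ ℓ → ℓ < hi → ε ℓ = false) ∧
      (hi = n + 2 ∨ ε hi = true)
  else
    hi = a ∧ 1 ≤ lo ∧ lo ≤ a ∧ (∀ ℓ, lo ≤ ℓ → ℓ < a → ε ℓ = true) ∧
      (lo = 1 ∨ ε (lo - 1) = false)

/-- Counterclockwise neighbor `R⁻¹(ℓ)` of the vertex `ℓ` of the polygon `P(Q)`, for the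
cyclic order `0`, lower-barred vertices increasing, `n+2`, upper-barred vertices
decreasing. -/
def Rinv (n : ℕ) (ε : ℕ → Bool) (ℓ : ℕ) : ℕ :=
  if ℓ = n + 2 then sSup ({0} ∪ {x | 1 ≤ x ∧ x ≤ n + 1 ∧ ε x = true})
  else if 1 ≤ ℓ ∧ ℓ ≤ n + 1 ∧ ε ℓ = true then
    sSup ({0} ∪ {x | 1 ≤ x ∧ x < ℓ ∧ ε x = true})
  else
    sInf ({n + 2} ∪ {x | ℓ < x ∧ x ≤ n + 1 ∧ ε x = false})

/-- `γ(i′,j′)` is a pivot of `γ(i,j)`. -/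
def IsPivot (n : ℕ) (ε : ℕ → Bool) (i j i' j' : ℕ) : Prop :=
  (i' = Rinv n ε i ∧ j' = j ∧ Rinv n ε i < j) ∨
    (i' = i ∧ j' = Rinv n ε j ∧ i < Rinv n ε j)

/-! ### Geometry of the polygon `P(Q)`.

The plane is identified with `ℂ`; `p x` is the vertex of the polygon labeled `x`,
for `0 ≤ x ≤ n+2`. -/

/-- The hypotheses on the points `p 0, …, p (n+2)` realizing the polygon `P(Q)`:
strictly increasing `x`-coordinates; `p 0` and `p (n+2)` on a common horizontal line `L`;
upper-barred vertices above `L`, lower-barred vertices below `L`; convex position. -/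
def PolyPts (n : ℕ) (ε : ℕ → Bool) (p : ℕ → ℂ) : Prop :=
  (∀ a b, a < b → b ≤ n + 2 → (p a).re < (p b).re) ∧
    (p (n + 2)).im = (p 0).im ∧
    (∀ i, 1 ≤ i → i ≤ n + 1 →
      (ε i = true → (p 0).im < (p i).im) ∧ (ε i = false → (p i).im < (p 0).im)) ∧
    ∀ i, i ≤ n + 2 → p i ∉ convexHull ℝ (p '' {j | j ≤ n + 2 ∧ j ≠ i})

/-- The line segment `γ(e.1, e.2)` of the polygon. -/
def Seg (p : ℕ → ℂ) (e : ℕ × ℕ) : Set ℂ := segment ℝ (p e.1) (p e.2)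

/-- Two segments cross when they intersect in a point that is not a common endpoint. -/
def Cross (p : ℕ → ℂ) (e f : ℕ × ℕ) : Prop :=
  ∃ z, z ∈ Seg p e ∧ z ∈ Seg p f ∧
    ¬((z = p e.1 ∨ z = p e.2) ∧ (z = p f.1 ∨ z = p f.2))

/-- Slope of the segment `γ(e.1, e.2)`. -/
def slope (p : ℕ → ℂ) (e : ℕ × ℕ) : ℝ :=
  ((p e.2).im - (p e.1).im) / ((p e.2).re - (p e.1).re)

def ValidPair (n : ℕ) (e : ℕ × ℕ) : Prop := e.1 < e.2 ∧ e.2 ≤ n + 2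

/-- A triangulation of `P(Q)`: a maximal collection of pairwise noncrossing segments. -/
def IsTriangulation (n : ℕ) (p : ℕ → ℂ) (T : Finset (ℕ × ℕ)) : Prop :=
  (∀ e ∈ T, ValidPair n e) ∧ (∀ e ∈ T, ∀ f ∈ T, e ≠ f → ¬Cross p e f) ∧
    ∀ e, ValidPair n e → e ∉ T → ∃ f ∈ T, Cross p e f

/-- Cross product of two planar vectors; positive iff `(u, v)` is counterclockwise. -/
def cross2 (u v : ℂ) : ℝ := u.re * v.im - u.im * v.re

/-- Arrows of the adjacency quiver `Q(T)` of a triangulation `T`: `e → f` whenever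
`e` and `f` are sides of a common triangle of `T` and `f` follows `e` going
counterclockwise around that triangle. -/
def TriArrow (p : ℕ → ℂ) (T : Finset (ℕ × ℕ)) (e f : ℕ × ℕ) : Prop :=
  ∃ a b c : ℕ, a < b ∧ b < c ∧ (a, b) ∈ T ∧ (b, c) ∈ T ∧ (a, c) ∈ T ∧
    ((0 < cross2 (p b - p a) (p c - p a) ∧
        ((e = (a, b) ∧ f = (b, c)) ∨ (e = (b, c) ∧ f = (a, c)) ∨
          (e = (a, c) ∧ f = (a, b)))) ∨
      (cross2 (p b - p a) (p c - p a) < 0 ∧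
        ((e = (a, c) ∧ f = (b, c)) ∨ (e = (b, c) ∧ f = (a, b)) ∨
          (e = (a, b) ∧ f = (a, c)))))

/-! ### Representations of `Q` -/

/-- A finite dimensional representation of the quiver `Q` of type `A_{n+2}` over `k`.
The vector spaces are indexed by `ℕ`, and are required to vanish outside the set
`{1, …, n+2}` of vertices of `Q`.  For each `i`, `fwd i : V i → V (i+1)` is the structure
map of the arrow `i → i+1` (it is required to vanish when the arrow is oriented in the
other direction, i.e. `ε i = false`) and `bwd i : V (i+1) → V i` is the structure map of
the arrow `i+1 → i` (required to vanish when `ε i = true`). -/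
structure ARep (k : Type) [Field k] (n : ℕ) (ε : ℕ → Bool) where
  V : ℕ → Type
  [acg : ∀ x, AddCommGroup (V x)]
  [mod : ∀ x, Module k (V x)]
  [fdim : ∀ x, FiniteDimensional k (V x)]
  triv : ∀ x, x = 0 ∨ n + 2 < x → ∀ v : V x, v = 0
  fwd : ∀ i, V i →ₗ[k] V (i + 1)
  bwd : ∀ i, V (i + 1) →ₗ[k] V i
  fwd_zero : ∀ i, ε i = false → fwd i = 0
  bwd_zero : ∀ i, ε i = true → bwd i = 0

attribute [instance] ARep.acg ARep.mod ARep.fdim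

variable {k : Type} [Field k] {n : ℕ} {ε : ℕ → Bool}

/-- Morphisms of representations. -/
@[ext]
structure ARep.Hom (M N : ARep k n ε) where
  app : ∀ x, M.V x →ₗ[k] N.V x
  comm_fwd : ∀ i (v : M.V i), app (i + 1) (M.fwd i v) = N.fwd i (app i v)
  comm_bwd : ∀ i (v : M.V (i + 1)), app i (M.bwd i v) = N.bwd i (app (i + 1) v)

/-- The identity morphism. -/
def ARep.Hom.id (M : ARep k n ε) : M.Hom M :=
  ⟨fun _ => LinearMap.id, fun _ _ => rfl, fun _ _ => rfl⟩

/-- Composition of morphisms. -/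
def ARep.Hom.comp {M N P : ARep k n ε} (g : N.Hom P) (f : M.Hom N) : M.Hom P where
  app x := (g.app x).comp (f.app x)
  comm_fwd i v := by simp only [LinearMap.comp_apply, f.comm_fwd, g.comm_fwd]
  comm_bwd i v := by simp only [LinearMap.comp_apply, f.comm_bwd, g.comm_bwd]

/-- Sum of two morphisms. -/
def ARep.Hom.add {M N : ARep k n ε} (f g : M.Hom N) : M.Hom N where
  app x := f.app x + g.app x
  comm_fwd i v := by
    simp only [LinearMap.add_apply, f.comm_fwd, g.comm_fwd, map_add]
  comm_bwd i v := by
    simp only [LinearMap.add_apply, f.comm_bwd, g.comm_bwd, map_add]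

/-- Scalar multiple of a morphism. -/
def ARep.Hom.smul {M N : ARep k n ε} (c : k) (f : M.Hom N) : M.Hom N where
  app x := c • f.app x
  comm_fwd i v := by simp only [LinearMap.smul_apply, f.comm_fwd, map_smul]
  comm_bwd i v := by simp only [LinearMap.smul_apply, f.comm_bwd, map_smul]

/-- Isomorphism of representations. -/
def ARep.Iso (M N : ARep k n ε) : Prop :=
  ∃ f : M.Hom N, ∀ x, Function.Bijective (f.app x)

/-- The zero representation(s). -/
def ARep.IsZero (M : ARep k n ε) : Prop := ∀ x, ∀ v : M.V x, v = 0

/-- The support of a representation. -/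
def ARep.supp (M : ARep k n ε) : Set ℕ := {x | ∃ v : M.V x, v ≠ 0}

/-- Direct sum of two representations. -/
def ARep.dsum (M N : ARep k n ε) : ARep k n ε where
  V x := M.V x × N.V x
  acg _ := by infer_instance
  mod _ := by infer_instance
  fdim _ := by infer_instance
  triv x hx v := by
    have h1 := M.triv x hx v.1
    have h2 := N.triv x hx v.2
    exact Prod.ext h1 h2
  fwd i := (M.fwd i).prodMap (N.fwd i)
  bwd i := (M.bwd i).prodMap (N.bwd i)
  fwd_zero i h := by
    show (M.fwd i).prodMap (N.fwd i) = 0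
    rw [M.fwd_zero i h, N.fwd_zero i h]
    apply LinearMap.ext; rintro ⟨a, b⟩; simp
  bwd_zero i h := by
    show (M.bwd i).prodMap (N.bwd i) = 0
    rw [M.bwd_zero i h, N.bwd_zero i h]
    apply LinearMap.ext; rintro ⟨a, b⟩; simp

/-- One dimensional space `k` if `P` holds, `0` otherwise (as a submodule of `k`). -/
def fiber (k : Type) [Field k] (P : Prop) : Submodule k k := if P then ⊤ else ⊥

/-- The canonical map `fiber k P → fiber k Q` : "identity" if `P ∧ Q`, zero otherwise. -/
def fiberMap (k : Type) [Field k] (P Q : Prop) : fiber k P →ₗ[k] fiber k Q :=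
  if h : P ∧ Q then
    { toFun := fun v => ⟨(v : k), by
        have hfib : fiber k Q = ⊤ := if_pos h.2
        rw [hfib]; exact Submodule.mem_top⟩
      map_add' := fun _ _ => rfl
      map_smul' := fun _ _ => rfl }
  else 0

/-- The zero representation. -/
def zeroRep (k : Type) [Field k] (n : ℕ) (ε : ℕ → Bool) : ARep k n ε where
  V _ := ↥(fiber k False)
  acg _ := by infer_instance
  mod _ := by infer_instance
  fdim _ := by infer_instance
  triv x _ v := by
    have hfib : fiber k False = ⊥ := if_neg (fun h : False => h.elim)
    obtain ⟨w, hw⟩ := v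
    apply Subtype.ext
    have hb : w ∈ (⊥ : Submodule k k) := hfib ▸ hw
    exact (Submodule.mem_bot k).1 hb
  fwd _ := 0
  bwd _ := 0
  fwd_zero _ _ := rfl
  bwd_zero _ _ := rfl

/-- The condition for a vertex `x` to be in the support of the interval representation
`M(i,j)`. -/
def SuppCond (n i j x : ℕ) : Prop := i ≤ x ∧ x ≤ j ∧ 1 ≤ x ∧ x ≤ n + 2

/-- The interval (string) representation `M(i,j)` of `Q`: one dimensional at each vertex
`x` with `i ≤ x ≤ j`, zero elsewhere, with identity maps on all arrows whose endpoints
both lie in `[i,j]`. -/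
def intervalRep (k : Type) [Field k] (n : ℕ) (ε : ℕ → Bool) (i j : ℕ) : ARep k n ε where
  V x := ↥(fiber k (SuppCond n i j x))
  acg _ := by infer_instance
  mod _ := by infer_instance
  fdim _ := by infer_instance
  triv x hx v := by
    have hP : ¬SuppCond n i j x := by simp only [SuppCond]; omega
    have hfib : fiber k (SuppCond n i j x) = ⊥ := if_neg hP
    obtain ⟨w, hw⟩ := v
    apply Subtype.ext
    have hb : w ∈ (⊥ : Submodule k k) := hfib ▸ hw
    exact (Submodule.mem_bot k).1 hb
  fwd ℓ :=
    if ε ℓ = true then fiberMap k (SuppCond n i j ℓ) (SuppCond n i j (ℓ + 1)) else 0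
  bwd ℓ :=
    if ε ℓ = true then 0 else fiberMap k (SuppCond n i j (ℓ + 1)) (SuppCond n i j ℓ)
  fwd_zero ℓ h := by simp [h]
  bwd_zero ℓ h := by simp [h]

/-- Direct sum of a list of representations. -/
def dsumList (k : Type) [Field k] (n : ℕ) (ε : ℕ → Bool) :
    List (ARep k n ε) → ARep k n ε
  | [] => zeroRep k n ε
  | M :: L => M.dsum (dsumList k n ε L)

/-- Indecomposable representations. -/
def ARep.Indec (M : ARep k n ε) : Prop :=
  ¬M.IsZero ∧ ∀ A B : ARep k n ε, M.Iso (A.dsum B) → A.IsZero ∨ B.IsZero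

/-- `A` is a direct summand of `T`. -/
def ARep.IsSummand (A T : ARep k n ε) : Prop := ∃ B : ARep k n ε, T.Iso (A.dsum B)

/-- A representation is basic when it has no repeated indecomposable direct summand. -/
def ARep.Basic (T : ARep k n ε) : Prop :=
  ∀ A : ARep k n ε, A.Indec → ¬(A.dsum A).IsSummand T

/-- A short exact sequence `0 → B → E → A → 0`. -/
structure SES (B A : ARep k n ε) where
  E : ARep k n ε
  ι : B.Hom E
  π : E.Hom A
  inj : ∀ x, Function.Injective (ι.app x)
  surj : ∀ x, Function.Surjective (π.app x)
  exct : ∀ x (v : E.V x), π.app x v = 0 ↔ ∃ u, ι.app x u = v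

/-- A short exact sequence splits. -/
def SES.Splits {B A : ARep k n ε} (σ : SES B A) : Prop :=
  ∃ r : σ.E.Hom B, ∀ x (v : B.V x), r.app x (σ.ι.app x v) = v

/-- `Ext¹(A, B) = 0` : every short exact sequence `0 → B → E → A → 0` splits. -/
def ExtZero (A B : ARep k n ε) : Prop := ∀ σ : SES B A, σ.Splits

/-- `Ext¹(A,B) ≅ k`, generated by (the class of) a short exact sequence
`0 → B → E → A → 0` with indecomposable middle term `E`: there is a non-split such
sequence `σ` with `σ.E` indecomposable such that every non-split sequence is equivalent
to a nonzero scalar multiple of `σ`. -/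
def ExtOneDimIndecMid (A B : ARep k n ε) : Prop :=
  ∃ σ : SES B A, ¬σ.Splits ∧ σ.E.Indec ∧
    ∀ τ : SES B A, ¬τ.Splits → ∃ c : k, c ≠ 0 ∧
      ∃ φ : σ.E.Hom τ.E, (∀ x, Function.Bijective (φ.app x)) ∧
        (∀ x (v : B.V x), φ.app x (σ.ι.app x v) = τ.ι.app x v) ∧
        (∀ x (v : σ.E.V x), τ.π.app x (φ.app x v) = c • σ.π.app x v)

/-- Almost rigid representations. -/
def AlmostRigid (T : ARep k n ε) : Prop :=
  T.Basic ∧ ∀ A B : ARep k n ε, A.Indec → B.Indec → A.IsSummand T → B.IsSummand T →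
    ExtZero A B ∨ ExtOneDimIndecMid A B

/-- Maximal almost rigid representations. -/
def MaxAlmostRigid (T : ARep k n ε) : Prop :=
  AlmostRigid T ∧ ∀ M : ARep k n ε, ¬M.IsZero → ¬AlmostRigid (T.dsum M)

/-- `f` is a section. -/
def ARep.Hom.IsSection {M N : ARep k n ε} (f : M.Hom N) : Prop :=
  ∃ g : N.Hom M, ∀ x (v : M.V x), g.app x (f.app x v) = v

/-- `f` is a retraction. -/
def ARep.Hom.IsRetraction {M N : ARep k n ε} (f : M.Hom N) : Prop :=
  ∃ g : N.Hom M, ∀ x (v : N.V x), f.app x (g.app x v) = v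

/-- Irreducible morphisms: `f` is neither a section nor a retraction, and in every
factorization `f = g ∘ h` either `h` is a section or `g` is a retraction. -/
def ARep.Hom.Irred {M N : ARep k n ε} (f : M.Hom N) : Prop :=
  ¬f.IsSection ∧ ¬f.IsRetraction ∧
    ∀ (Z : ARep k n ε) (h : M.Hom Z) (g : Z.Hom N),
      (∀ x (v : M.V x), f.app x v = g.app x (h.app x v)) → h.IsSection ∨ g.IsRetraction

/-- Subrepresentations : families of subspaces closed under the structure maps. -/
structure Subrep (M : ARep k n ε) where
  U : ∀ x, Submodule k (M.V x)
  fwd_mem : ∀ i, ∀ v ∈ U i, M.fwd i v ∈ U (i + 1)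
  bwd_mem : ∀ i, ∀ v ∈ U (i + 1), M.bwd i v ∈ U i

/-- The central charge `Z(M) = Σ_{x=1}^{n+2} dim_k(M_x) · (p_x − p_{x−1})`. -/
def charge (p : ℕ → ℂ) (M : ARep k n ε) : ℂ :=
  ∑ x ∈ Finset.Icc 1 (n + 2), (Module.finrank k (M.V x) : ℂ) * (p x - p (x - 1))

/-- The central charge of a subrepresentation. -/
def subCharge (p : ℕ → ℂ) {M : ARep k n ε} (L : Subrep M) : ℂ :=
  ∑ x ∈ Finset.Icc 1 (n + 2), (Module.finrank k (L.U x) : ℂ) * (p x - p (x - 1))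

/-- The representation `F(T) = ⊕_{γ(a,b) ∈ T} M(a+1, b)` attached to a collection `T` of
segments of the polygon `P(Q)`. -/
def FRep (k : Type) [Field k] (n : ℕ) (ε : ℕ → Bool) (T : Finset (ℕ × ℕ)) : ARep k n ε :=
  dsumList k n ε (T.toList.map fun e => intervalRep k n ε (e.1 + 1) e.2)

end CambrianA

namespace CambrianA

/-- The orientation of the subdivided quiver `Q̄` of type `A_{2n+3}` : the vertex `v` of
`Q̄` (a half-integer `1, 3/2, …, n+2`) corrresponds to the index `2v−1 ∈ {1, …, 2n+3}`,
and both halves of the original arrow `i ↔ i+1` inherit its orientation. -/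
def barε (ε : ℕ → Bool) : ℕ → Bool := fun a => ε ((a + 1) / 2)

/-! A representation `M` of `Q` determines a representation of `Q̄` by splitting each structure
map into a surjection onto its image followed by an injection, the image being placed at the
midpoint of the arrow.  Such image factorizations are functorial in a unique way, so a morphism of
subdivided representations is the same thing as a morphism of the original ones.  For the interval
representation `M(i,j)` the image of the map between `ℓ` and `ℓ + 1` is one-dimensional exactly when
both ends lie in `[i,j]`, which is why `M̄(i,j)` is its subdivision. -/

theorem barε_two_mul_add_one (ε : ℕ → Bool) (x : ℕ) : barε ε (2 * x + 1) = ε (x + 1) :=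
  congrArg ε (by omega)

theorem barε_two_mul (ε : ℕ → Bool) (x : ℕ) : barε ε (2 * x) = ε x :=
  congrArg ε (by omega)

theorem exists_linearMap_between_factorizations {K A B C A' B' C' : Type*} [DivisionRing K]
    [AddCommGroup A] [AddCommGroup B] [AddCommGroup C]
    [AddCommGroup A'] [AddCommGroup B'] [AddCommGroup C']
    [Module K A] [Module K B] [Module K C] [Module K A'] [Module K B'] [Module K C']
    {p : A →ₗ[K] B} {q : B →ₗ[K] C} {p' : A' →ₗ[K] B'} {q' : B' →ₗ[K] C'}
    (hp : Function.Surjective p) (hq' : Function.Injective q') (α : A →ₗ[K] A') (γ : C →ₗ[K] C')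
    (h : ∀ a, γ (q (p a)) = q' (p' (α a))) :
    ∃ β : B →ₗ[K] B', (∀ a, β (p a) = p' (α a)) ∧ ∀ b, γ (q b) = q' (β b) := by
  obtain ⟨s, hs⟩ := p.exists_rightInverse_of_surjective (LinearMap.range_eq_top.2 hp)
  have right_inv (b : B) : p (s b) = b := LinearMap.congr_fun hs b
  refine ⟨p' ∘ₗ α ∘ₗ s, fun a => hq' ?_, fun b => ?_⟩
  · calc q' (p' (α (s (p a)))) = γ (q (p (s (p a)))) := (h _).symm
      _ = q' (p' (α a)) := by rw [right_inv, h]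
  · calc γ (q b) = γ (q (p (s b))) := by rw [right_inv]
      _ = q' (p' (α (s b))) := h _

section

variable {k : Type} [Field k] {n : ℕ} {ε : ℕ → Bool}

namespace ARep.Hom

variable {M N : ARep k n ε}

instance : Zero (M.Hom N) :=
  ⟨⟨fun _ => 0, fun _ _ => (map_zero _).symm, fun _ _ => (map_zero _).symm⟩⟩

instance : Add (M.Hom N) := ⟨add⟩

instance : AddCommMonoid (M.Hom N) where
  add_assoc _ _ _ := ARep.Hom.ext (funext fun _ => add_assoc _ _ _)
  zero_add _ := ARep.Hom.ext (funext fun _ => zero_add _)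
  add_zero _ := ARep.Hom.ext (funext fun _ => add_zero _)
  add_comm _ _ := ARep.Hom.ext (funext fun _ => add_comm _ _)
  nsmul := nsmulRec

instance : Module k (M.Hom N) where
  smul := smul
  one_smul _ := ARep.Hom.ext (funext fun _ => one_smul _ _)
  mul_smul _ _ _ := ARep.Hom.ext (funext fun _ => mul_smul _ _ _)
  smul_zero _ := ARep.Hom.ext (funext fun _ => smul_zero _)
  smul_add _ _ _ := ARep.Hom.ext (funext fun _ => smul_add _ _ _)
  add_smul _ _ _ := ARep.Hom.ext (funext fun _ => add_smul _ _ _)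
  zero_smul _ := ARep.Hom.ext (funext fun _ => zero_smul _ _)

theorem ext_succ {f g : M.Hom N} (h : ∀ x, f.app (x + 1) = g.app (x + 1)) : f = g := by
  refine ARep.Hom.ext (funext fun x => ?_)
  cases x with
  | zero => exact LinearMap.ext fun v => by rw [M.triv 0 (.inl rfl) v, map_zero, map_zero]
  | succ x => exact h x

end ARep.Hom

/-- A representation `M'` of `Q̄` *subdivides* the representation `M` of `Q` when it agrees with
`M` at the vertices of `Q` and the two halves of each arrow form an image factorization of the
corresponding structure map of `M`.  The vertex `x + 1` of `Q` has index `2 * x + 1` in `Q̄`, and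
the midpoint of the arrow between `x + 1` and `x + 2` has index `2 * (x + 1)`. -/
structure Subdivision (M : ARep k n ε) (M' : ARep k (2 * n + 1) (barε ε)) where
  vertex : ∀ x, M.V (x + 1) ≃ₗ[k] M'.V (2 * x + 1)
  vertex_fwd : ∀ x, ε (x + 1) = true → ∀ v : M.V (x + 1),
    vertex (x + 1) (M.fwd (x + 1) v) = M'.fwd (2 * (x + 1)) (M'.fwd (2 * x + 1) (vertex x v))
  vertex_bwd : ∀ x, ε (x + 1) = false → ∀ v : M.V (x + 1 + 1),
    vertex x (M.bwd (x + 1) v) = M'.bwd (2 * x + 1) (M'.bwd (2 * (x + 1)) (vertex (x + 1) v))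
  fwd_surjective : ∀ x, ε (x + 1) = true → Function.Surjective (M'.fwd (2 * x + 1))
  fwd_injective : ∀ x, ε (x + 1) = true → Function.Injective (M'.fwd (2 * (x + 1)))
  bwd_surjective : ∀ x, ε (x + 1) = false → Function.Surjective (M'.bwd (2 * (x + 1)))
  bwd_injective : ∀ x, ε (x + 1) = false → Function.Injective (M'.bwd (2 * x + 1))

namespace Subdivision

variable {M N : ARep k n ε} {M' N' : ARep k (2 * n + 1) (barε ε)}

/-- The restriction to `Q` of a morphism between subdivisions. -/
def restrict (σ : Subdivision M M') (τ : Subdivision N N') : M'.Hom N' →ₗ[k] M.Hom N where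
  toFun f :=
    { app := fun
        | 0 => 0
        | x + 1 => ((σ.vertex x).arrowCongr (τ.vertex x)).symm (f.app (2 * x + 1))
      comm_fwd := by
        rintro (_ | x) v
        · rw [M.triv 0 (.inl rfl) v, map_zero, map_zero, map_zero, map_zero]
        · cases hε : ε (x + 1) with
          | false =>
            rw [M.fwd_zero _ hε, N.fwd_zero _ hε]
            exact map_zero _
          | true =>
            apply (τ.vertex (x + 1)).injective
            rw [τ.vertex_fwd x hε]
            simp only [LinearEquiv.arrowCongr_symm_apply, LinearEquiv.apply_symm_apply,
              σ.vertex_fwd x hε]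
            rw [← f.comm_fwd]
            exact f.comm_fwd (2 * (x + 1)) _
      comm_bwd := by
        rintro (_ | x) v
        · exact (N.triv 0 (.inl rfl) _).symm
        · cases hε : ε (x + 1) with
          | false =>
            apply (τ.vertex x).injective
            rw [τ.vertex_bwd x hε]
            simp only [LinearEquiv.arrowCongr_symm_apply, LinearEquiv.apply_symm_apply,
              σ.vertex_bwd x hε]
            rw [f.comm_bwd]
            exact congrArg _ (f.comm_bwd (2 * (x + 1)) _)
          | true =>
            rw [M.bwd_zero _ hε, N.bwd_zero _ hε]
            exact map_zero _ }
  map_add' _ _ := ARep.Hom.ext_succ fun _ => map_add _ _ _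
  map_smul' _ _ := ARep.Hom.ext_succ fun _ => map_smul _ _ _

theorem restrict_app_succ (σ : Subdivision M M') (τ : Subdivision N N') (f : M'.Hom N') (x : ℕ) :
    (restrict σ τ f).app (x + 1) =
      ((σ.vertex x).arrowCongr (τ.vertex x)).symm (f.app (2 * x + 1)) :=
  rfl

theorem restrict_injective (σ : Subdivision M M') (τ : Subdivision N N') :
    Function.Injective (restrict σ τ) := by
  intro f g hfg
  have app_vertex (x : ℕ) : f.app (2 * x + 1) = g.app (2 * x + 1) :=
    ((σ.vertex x).arrowCongr (τ.vertex x)).symm.injective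
      (congrArg (fun h : M.Hom N => h.app (x + 1)) hfg)
  refine ARep.Hom.ext_succ fun y => ?_
  obtain ⟨x, rfl | rfl⟩ := Nat.even_or_odd' y
  · exact app_vertex x
  · refine LinearMap.ext fun w => ?_
    cases hε : ε (x + 1) with
    | false =>
      obtain ⟨v, rfl⟩ := σ.bwd_surjective x hε w
      have app_next : f.app (2 * (x + 1) + 1) v = g.app (2 * (x + 1) + 1) v :=
        LinearMap.congr_fun (app_vertex (x + 1)) v
      change f.app (2 * (x + 1)) _ = g.app (2 * (x + 1)) _
      rw [f.comm_bwd, g.comm_bwd, app_next]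
    | true =>
      obtain ⟨v, rfl⟩ := σ.fwd_surjective x hε w
      rw [f.comm_fwd, g.comm_fwd, app_vertex]

theorem exists_midpoint_map (σ : Subdivision M M') (τ : Subdivision N N') (f : M.Hom N) (x : ℕ) :
    let α := (σ.vertex x).arrowCongr (τ.vertex x) (f.app (x + 1))
    let γ := (σ.vertex (x + 1)).arrowCongr (τ.vertex (x + 1)) (f.app (x + 1 + 1))
    ∃ β : M'.V (2 * (x + 1)) →ₗ[k] N'.V (2 * (x + 1)),
      (∀ v, β (M'.fwd (2 * x + 1) v) = N'.fwd (2 * x + 1) (α v)) ∧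
      (∀ v, γ (M'.fwd (2 * (x + 1)) v) = N'.fwd (2 * (x + 1)) (β v)) ∧
      (∀ v, α (M'.bwd (2 * x + 1) v) = N'.bwd (2 * x + 1) (β v)) ∧
      ∀ v, β (M'.bwd (2 * (x + 1)) v) = N'.bwd (2 * (x + 1)) (γ v) := by
  intro α γ
  have ε_odd : barε ε (2 * x + 1) = ε (x + 1) := barε_two_mul_add_one ε x
  have ε_even : barε ε (2 * (x + 1)) = ε (x + 1) := barε_two_mul ε (x + 1)
  cases hε : ε (x + 1) with
  | false =>
    obtain ⟨β, hβ, hα⟩ := exists_linearMap_between_factorizations (q := M'.bwd (2 * x + 1))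
      (p' := N'.bwd (2 * (x + 1)))
      (σ.bwd_surjective x hε) (τ.bwd_injective x hε) γ α fun v => by
        obtain ⟨v, rfl⟩ := (σ.vertex (x + 1)).surjective v
        simp only [α, γ, LinearEquiv.arrowCongr_apply, LinearEquiv.symm_apply_apply]
        rw [← σ.vertex_bwd x hε, ← τ.vertex_bwd x hε, LinearEquiv.symm_apply_apply, f.comm_bwd]
    refine ⟨β, fun v => ?_, fun v => ?_, hα, hβ⟩
    · rw [M'.fwd_zero _ (ε_odd.trans hε), N'.fwd_zero _ (ε_odd.trans hε)]
      exact map_zero _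
    · rw [M'.fwd_zero _ (ε_even.trans hε), N'.fwd_zero _ (ε_even.trans hε)]
      exact map_zero _
  | true =>
    obtain ⟨β, hβ, hγ⟩ := exists_linearMap_between_factorizations (q := M'.fwd (2 * (x + 1)))
      (p' := N'.fwd (2 * x + 1))
      (σ.fwd_surjective x hε) (τ.fwd_injective x hε) α γ fun v => by
        obtain ⟨v, rfl⟩ := (σ.vertex x).surjective v
        simp only [α, γ, LinearEquiv.arrowCongr_apply, LinearEquiv.symm_apply_apply]
        rw [← σ.vertex_fwd x hε, ← τ.vertex_fwd x hε, LinearEquiv.symm_apply_apply, f.comm_fwd]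
    refine ⟨β, hβ, hγ, fun v => ?_, fun v => ?_⟩
    · rw [M'.bwd_zero _ (ε_odd.trans hε), N'.bwd_zero _ (ε_odd.trans hε)]
      exact map_zero _
    · rw [M'.bwd_zero _ (ε_even.trans hε), N'.bwd_zero _ (ε_even.trans hε)]
      exact map_zero _

theorem restrict_surjective (σ : Subdivision M M') (τ : Subdivision N N') :
    Function.Surjective (restrict σ τ) := by
  intro f
  choose mid mid_fwd fwd_mid bwd_mid mid_bwd using exists_midpoint_map σ τ f
  let even : ∀ x, M'.V (2 * x) →ₗ[k] N'.V (2 * x)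
    | 0 => 0
    | x + 1 => mid x
  let odd (x : ℕ) := (σ.vertex x).arrowCongr (τ.vertex x) (f.app (x + 1))
  let app : ∀ y, M'.V y →ₗ[k] N'.V y := Nat.evenOddRec 0 (fun x _ => even x) fun x _ => odd x
  have app_even (x : ℕ) : app (2 * x) = even x := Nat.evenOddRec_even _ _ _ rfl x
  have app_odd (x : ℕ) : app (2 * x + 1) = odd x := Nat.evenOddRec_odd _ _ _ rfl x
  refine ⟨⟨app, fun y w => ?_, fun y w => ?_⟩, ARep.Hom.ext_succ fun x => ?_⟩
  · obtain ⟨x, rfl | rfl⟩ := Nat.even_or_odd' y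
    · rw [app_even, app_odd]
      cases x with
      | zero => rw [M'.triv 0 (.inl rfl) w]; simp only [map_zero]
      | succ x => exact fwd_mid x w
    · rw [app_odd]
      exact (LinearMap.congr_fun (app_even (x + 1)) _).trans (mid_fwd x w)
  · obtain ⟨x, rfl | rfl⟩ := Nat.even_or_odd' y
    · rw [app_even, app_odd]
      cases x with
      | zero => exact (N'.triv 0 (.inl rfl) _).symm
      | succ x => exact mid_bwd x w
    · rw [app_odd]
      exact (bwd_mid x w).trans (congrArg _ (LinearMap.congr_fun (app_even (x + 1)) w).symm)
  · rw [restrict_app_succ]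
    exact (LinearEquiv.symm_apply_eq _).2 (app_odd x)

/-- Morphisms of representations of `Q` correspond to morphisms of their subdivisions. -/
def homEquiv (σ : Subdivision M M') (τ : Subdivision N N') : M.Hom N ≃ₗ[k] M'.Hom N' :=
  (LinearEquiv.ofBijective (restrict σ τ)
    ⟨restrict_injective σ τ, restrict_surjective σ τ⟩).symm

end Subdivision

section fiber

variable {P Q R : Prop}

theorem fiber_coe_eq_zero (h : ¬P) (v : fiber k P) : (v : k) = 0 :=
  (Submodule.mem_bot k).1 ((if_neg h : fiber k P = ⊥) ▸ v.2)

theorem coe_fiberMap (v : fiber k P) : (fiberMap k P Q v : k) = if Q then (v : k) else 0 := by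
  by_cases hP : P <;> by_cases hQ : Q <;> simp [fiberMap, hP, hQ, fiber_coe_eq_zero]

theorem fiberMap_self (v : fiber k P) : fiberMap k P P v = v := by
  apply Subtype.ext
  by_cases hP : P <;> simp [coe_fiberMap, hP, fiber_coe_eq_zero]

theorem fiberMap_fiberMap (h : P → R → Q) (v : fiber k P) :
    fiberMap k Q R (fiberMap k P Q v) = fiberMap k P R v := by
  apply Subtype.ext
  by_cases hP : P
  · by_cases hR : R <;> simp [coe_fiberMap, hR, h hP]
  · simp [coe_fiberMap, fiber_coe_eq_zero hP]

theorem fiberMap_injective (h : P → Q) : Function.Injective (fiberMap k P Q) :=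
  Function.LeftInverse.injective (g := fiberMap k Q P) fun v => by
    rw [fiberMap_fiberMap fun hP _ => h hP, fiberMap_self]

theorem fiberMap_surjective (h : Q → P) : Function.Surjective (fiberMap k P Q) :=
  Function.RightInverse.surjective (g := fiberMap k Q P) fun v => by
    rw [fiberMap_fiberMap fun hQ _ => h hQ, fiberMap_self]

theorem fiberMap_fiberMap_eq_of_iff_and {P' Q' : Prop} (hP : P' ↔ P) (hQ : Q' ↔ Q)
    (hR : R ↔ P ∧ Q) (v : fiber k P) :
    fiberMap k Q Q' (fiberMap k P Q v) = fiberMap k R Q' (fiberMap k P' R (fiberMap k P P' v)) := by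
  rw [fiberMap_fiberMap fun _ => hQ.1, fiberMap_fiberMap fun p _ => hP.2 p,
    fiberMap_fiberMap fun p q => hR.2 ⟨p, hQ.1 q⟩]

end fiber

theorem suppCond_two_mul_add_one (n i j x : ℕ) :
    SuppCond (2 * n + 1) (2 * i - 1) (2 * j - 1) (2 * x + 1) ↔ SuppCond n i j (x + 1) := by
  unfold SuppCond
  omega

theorem suppCond_two_mul (n i j x : ℕ) :
    SuppCond (2 * n + 1) (2 * i - 1) (2 * j - 1) (2 * x) ↔
      SuppCond n i j x ∧ SuppCond n i j (x + 1) := by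
  unfold SuppCond
  omega

theorem intervalRep_fwd (i j : ℕ) {ℓ : ℕ} (h : ε ℓ = true) :
    (intervalRep k n ε i j).fwd ℓ = fiberMap k (SuppCond n i j ℓ) (SuppCond n i j (ℓ + 1)) :=
  if_pos h

theorem intervalRep_bwd (i j : ℕ) {ℓ : ℕ} (h : ε ℓ = false) :
    (intervalRep k n ε i j).bwd ℓ = fiberMap k (SuppCond n i j (ℓ + 1)) (SuppCond n i j ℓ) :=
  if_neg (by simp [h])

/-- `M̄(i,j)` as the subdivision of `M(i,j)`: the vertices `i` and `j` of `Q` have index `2 * i - 1`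
and `2 * j - 1` in `Q̄`. -/
def intervalSubdivision (k : Type) [Field k] (n : ℕ) (ε : ℕ → Bool) (i j : ℕ) :
    Subdivision (intervalRep k n ε i j)
      (intervalRep k (2 * n + 1) (barε ε) (2 * i - 1) (2 * j - 1)) where
  vertex x := LinearEquiv.ofBijective (fiberMap k _ _)
    ⟨fiberMap_injective (suppCond_two_mul_add_one n i j x).2,
      fiberMap_surjective (suppCond_two_mul_add_one n i j x).1⟩
  vertex_fwd x hε v := by
    rw [intervalRep_fwd _ _ hε, intervalRep_fwd _ _ ((barε_two_mul_add_one ε x).trans hε),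
      intervalRep_fwd _ _ ((barε_two_mul ε (x + 1)).trans hε)]
    exact fiberMap_fiberMap_eq_of_iff_and (suppCond_two_mul_add_one n i j x)
      (suppCond_two_mul_add_one n i j (x + 1)) (suppCond_two_mul n i j (x + 1)) v
  vertex_bwd x hε v := by
    rw [intervalRep_bwd _ _ hε, intervalRep_bwd _ _ ((barε_two_mul_add_one ε x).trans hε),
      intervalRep_bwd _ _ ((barε_two_mul ε (x + 1)).trans hε)]
    exact fiberMap_fiberMap_eq_of_iff_and (suppCond_two_mul_add_one n i j (x + 1))
      (suppCond_two_mul_add_one n i j x) ((suppCond_two_mul n i j (x + 1)).trans and_comm) v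
  fwd_surjective x hε := by
    rw [intervalRep_fwd _ _ ((barε_two_mul_add_one ε x).trans hε)]
    exact fiberMap_surjective fun h =>
      (suppCond_two_mul_add_one n i j x).2 ((suppCond_two_mul n i j (x + 1)).1 h).1
  fwd_injective x hε := by
    rw [intervalRep_fwd _ _ ((barε_two_mul ε (x + 1)).trans hε)]
    exact fiberMap_injective fun h =>
      (suppCond_two_mul_add_one n i j (x + 1)).2 ((suppCond_two_mul n i j (x + 1)).1 h).2
  bwd_surjective x hε := by
    rw [intervalRep_bwd _ _ ((barε_two_mul ε (x + 1)).trans hε)]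
    exact fiberMap_surjective fun h =>
      (suppCond_two_mul_add_one n i j (x + 1)).2 ((suppCond_two_mul n i j (x + 1)).1 h).2
  bwd_injective x hε := by
    rw [intervalRep_bwd _ _ ((barε_two_mul_add_one ε x).trans hε)]
    exact fiberMap_injective fun h =>
      (suppCond_two_mul_add_one n i j x).2 ((suppCond_two_mul n i j (x + 1)).1 h).1

theorem stmt_19_general {M N : ARep k n ε} {M' N' : ARep k (2 * n + 1) (barε ε)}
    (σ : Subdivision M M') (τ : Subdivision N N') :
    ∃ e : M.Hom N ≃ M'.Hom N',
      (∀ f g, e (f.add g) = (e f).add (e g)) ∧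
      ∀ (c : k) f, e (ARep.Hom.smul c f) = ARep.Hom.smul c (e f) :=
  ⟨(σ.homEquiv τ).toEquiv, map_add (σ.homEquiv τ), map_smul (σ.homEquiv τ)⟩

end

/-- `dim_k Hom_{rep Q}(M(i,j), M(i′,j′)) =
dim_k Hom_{rep Q̄}(M̄(i,j), M̄(i′,j′))`, expressed by the existence of a `k`-linear
bijection between the two `Hom` spaces. -/
theorem stmt_19 (k : Type) [Field k] (n : ℕ) (ε : ℕ → Bool) (i j i' j' : ℕ)
    (h1 : 1 ≤ i) (h2 : i ≤ j) (h3 : j ≤ n + 2)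
    (h4 : 1 ≤ i') (h5 : i' ≤ j') (h6 : j' ≤ n + 2) :
    ∃ e : ((intervalRep k n ε i j).Hom (intervalRep k n ε i' j')) ≃
          ((intervalRep k (2 * n + 1) (barε ε) (2 * i - 1) (2 * j - 1)).Hom
            (intervalRep k (2 * n + 1) (barε ε) (2 * i' - 1) (2 * j' - 1))),
      (∀ f g, e (f.add g) = (e f).add (e g)) ∧
      (∀ (c : k) f, e (ARep.Hom.smul c f) = ARep.Hom.smul c (e f)) := by
  exact stmt_19_general (intervalSubdivision k n ε i j) (intervalSubdivision k n ε i' j')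

end CambrianA
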